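/- Let h₀ = span{x² + z², 2y − xz} ⊆ L₀. Then the first prolongation of h₀ is {u ∈ L₁ : {u, x} ∈ h₀ and {u, z} ∈ h₀} = span{x(x²+z²) − 2z(2y−xz), z(x²+z²) + 2x(2y−xz)}, and the action of h₀ on this two-dimensional space by the Lagrange bracket is irreducible. -/

import Mathlib

noncomputable section

open MvPolynomial

/-- The polynomial algebra `L = ℝ[x, y, z]`, with `x = X 0`, `y = X 1`, `z = X 2`. -/
abbrev PL : Type := MvPolynomial (Fin 3) ℝ

/-- The Lagrange bracket
`{f,g} = f_x g_z − f_z g_x + z (f_y g_z − f_z g_y) + f g_y − g f_y` on `L`. -/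
noncomputable def lagr (f g : PL) : PL :=
  pderiv 0 f * pderiv 2 g - pderiv 2 f * pderiv 0 g
    + X 2 * (pderiv 1 f * pderiv 2 g - pderiv 2 f * pderiv 1 g)
    + f * pderiv 1 g - g * pderiv 1 f

/-- `L_p`: the span of the monomials of total weight `p + 2`, where the variables
`x, y, z` have weights `1, 2, 1` respectively. -/
def Lgrade (p : ℤ) : Submodule ℝ PL where
  carrier := {f | ∀ m ∈ f.support, (m 0 : ℤ) + 2 * m 1 + m 2 = p + 2}
  add_mem' := fun {f g} hf hg m hm => by
    rcases Finset.mem_union.mp (MvPolynomial.support_add hm) with hh | hh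
    · exact hf m hh
    · exact hg m hh
  zero_mem' := by
    intro m hm
    simp [MvPolynomial.support_zero] at hm
  smul_mem' := fun c f hf m hm => hf m (MvPolynomial.support_smul hm)

/-- `L₁ = span{x³, x²z, xz², z³, x(2y−xz), z(2y−xz)}`. -/
noncomputable def L1span : Submodule ℝ PL :=
  Submodule.span ℝ
    {X 0 ^ 3, X 0 ^ 2 * X 2, X 0 * X 2 ^ 2, X 2 ^ 3,
      X 0 * (2 * X 1 - X 0 * X 2), X 2 * (2 * X 1 - X 0 * X 2)}

/-- `h₀ = span{x² + z², 2y − xz}`. -/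
noncomputable def h0c : Submodule ℝ PL :=
  Submodule.span ℝ {X 0 ^ 2 + X 2 ^ 2, 2 * X 1 - X 0 * X 2}

/-- `span{x(x²+z²) − 2z(2y−xz), z(x²+z²) + 2x(2y−xz)}`. -/
noncomputable def W1span : Submodule ℝ PL :=
  Submodule.span ℝ
    {X 0 * (X 0 ^ 2 + X 2 ^ 2) - 2 * X 2 * (2 * X 1 - X 0 * X 2),
     X 2 * (X 0 ^ 2 + X 2 ^ 2) + 2 * X 0 * (2 * X 1 - X 0 * X 2)}

/-! Bracketing with `x` and `z` amounts to the first-order operators `-(∂_z + x ∂_y)` and `∂_x`,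
and `L₀`, `L₁` have bases made of monomials in `x, z` and multiples of `2y - xz`. In these bases
the two conditions defining the prolongation become four linear equations on the six coefficients
of `u ∈ L₁`.

On the resulting plane `x² + z²` acts with square `-4`. As `-4` is not a square in `ℝ`, no vector
of the plane is an eigenvector, so no line in it is invariant. -/

section InvariantSubspaces

variable {K V : Type*} [Field K] [AddCommGroup V] [Module K V] {f : Module.End K V} {c : K}

theorem linearIndependent_pair_apply_of_not_isSquare (hc : ¬IsSquare c) {v : V} (hv : v ≠ 0)
    (hf : f (f v) = c • v) : LinearIndependent K ![v, f v] := by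
  refine (LinearIndependent.pair_iff' hv).mpr fun a ha => hc ⟨a, ?_⟩
  apply smul_left_injective K hv
  calc c • v = f (a • v) := by rw [ha, hf]
    _ = (a * a) • v := by rw [map_smul, ← ha, smul_smul]

theorem eq_bot_or_eq_of_invariant_of_not_isSquare (hc : ¬IsSquare c) {P W : Submodule K V}
    (hP : Module.finrank K P = 2) (hf : ∀ v ∈ P, f (f v) = c • v) (hWP : W ≤ P)
    (hW : ∀ w ∈ W, f w ∈ W) : W = ⊥ ∨ W = P := by
  refine or_iff_not_imp_left.mpr fun hbot => ?_
  obtain ⟨w, hw, hw0⟩ := W.ne_bot_iff.mp hbot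
  have : FiniteDimensional K P := Module.finite_of_finrank_eq_succ hP
  have : FiniteDimensional K W := Submodule.finiteDimensional_of_le hWP
  have hind := linearIndependent_pair_apply_of_not_isSquare hc hw0 (hf w (hWP hw))
  have hspan : Submodule.span K (Set.range ![w, f w]) ≤ W := by
    rw [Matrix.range_cons_cons_empty, Submodule.span_le, Set.pair_subset_iff]
    exact ⟨hw, hW w hw⟩
  refine Submodule.eq_of_le_of_finrank_le hWP ?_
  calc Module.finrank K P = Module.finrank K (Submodule.span K (Set.range ![w, f w])) := by
        rw [hP, finrank_span_eq_card hind, Fintype.card_fin]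
    _ ≤ Module.finrank K W := Submodule.finrank_mono hspan

end InvariantSubspaces

theorem pderiv_ofNat {σ R : Type*} [CommSemiring R] (i : σ) (n : ℕ) [n.AtLeastTwo] :
    pderiv i (ofNat(n) : MvPolynomial σ R) = 0 :=
  Derivation.map_natCast _ n

theorem lagr_X_zero (u : PL) : lagr u (X 0) = -(pderiv 2 u + X 0 * pderiv 1 u) := by
  simp only [lagr, pderiv_X, Pi.single_apply, Fin.reduceEq, if_true, if_false]
  ring

theorem lagr_X_two (u : PL) : lagr u (X 2) = pderiv 0 u := by
  simp [lagr, pderiv_X]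

theorem lagr_sq_add_sq (g : PL) :
    lagr (X 0 ^ 2 + X 2 ^ 2) g =
      2 * (X 0 * pderiv 2 g - X 2 * pderiv 0 g) + (X 0 ^ 2 - X 2 ^ 2) * pderiv 1 g := by
  simp only [lagr, map_add, Derivation.leibniz_pow, pderiv_X, Pi.single_apply, Fin.reduceEq,
    if_true, if_false, smul_eq_mul, nsmul_eq_mul, Nat.cast_ofNat]
  ring

/-- The operator `ad f : g ↦ {f, g}` as an endomorphism of the vector space `L`, for use with
statements about invariant subspaces. -/
def lagrAd (f : PL) : Module.End ℝ PL where
  toFun := lagr f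
  map_add' g h := by
    simp only [lagr, map_add]
    ring
  map_smul' r g := by
    simp only [lagr, Derivation.map_smul]
    simp only [smul_eq_C_mul, RingHom.id_apply]
    ring

/-- The element of `L₀` with coordinates `a, b, c, d` in the basis `x², xz, z², 2y − xz`. -/
def weightTwoForm (a b c d : ℝ) : PL :=
  C a * X 0 ^ 2 + C b * (X 0 * X 2) + C c * X 2 ^ 2 + C d * (2 * X 1 - X 0 * X 2)

/-- The element of `L₁` with coordinates `a, b, c, d, e, f` in the basis
`x³, x²z, xz², z³, x(2y − xz), z(2y − xz)`. -/
def weightThreeForm (a b c d e f : ℝ) : PL :=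
  C a * X 0 ^ 3 + C b * (X 0 ^ 2 * X 2) + C c * (X 0 * X 2 ^ 2) + C d * X 2 ^ 3
    + C e * (X 0 * (2 * X 1 - X 0 * X 2)) + C f * (X 2 * (2 * X 1 - X 0 * X 2))

theorem mem_L1span_iff {u : PL} :
    u ∈ L1span ↔ ∃ a b c d e f, weightThreeForm a b c d e f = u := by
  simp only [L1span, Submodule.mem_span_insert, Submodule.mem_span_singleton, smul_eq_C_mul,
    weightThreeForm]
  constructor
  · rintro ⟨a, _, ⟨b, _, ⟨c, _, ⟨d, _, ⟨e, _, ⟨f, rfl⟩, rfl⟩, rfl⟩, rfl⟩, rfl⟩, rfl⟩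
    exact ⟨a, b, c, d, e, f, by ring⟩
  · rintro ⟨a, b, c, d, e, f, rfl⟩
    exact ⟨a, _, ⟨b, _, ⟨c, _, ⟨d, _, ⟨e, _, ⟨f, rfl⟩, rfl⟩, rfl⟩, rfl⟩, rfl⟩, by ring⟩

theorem weightTwoForm_inj {a b c d a' b' c' d' : ℝ} :
    weightTwoForm a b c d = weightTwoForm a' b' c' d' ↔ a = a' ∧ b = b' ∧ c = c' ∧ d = d' := by
  refine ⟨fun h => ?_, by rintro ⟨rfl, rfl, rfl, rfl⟩; rfl⟩
  have heval (v : Fin 3 → ℝ) := congrArg (eval v) h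
  simp only [weightTwoForm, map_add, map_sub, map_mul, map_pow, map_ofNat, eval_C, eval_X] at heval
  have hx : a = a' := by simpa using heval ![1, 0, 0]
  have hz : c = c' := by simpa using heval ![0, 0, 1]
  have hy : d = d' := by simpa using heval ![0, 1, 0]
  have hxz : b = b' := by simpa [hx, hz, hy] using heval ![1, 0, 1]
  exact ⟨hx, hxz, hz, hy⟩

theorem weightTwoForm_mem_h0c_iff {a b c d : ℝ} :
    weightTwoForm a b c d ∈ h0c ↔ a = c ∧ b = 0 := by
  have hcomb (r s : ℝ) : r • (X 0 ^ 2 + X 2 ^ 2 : PL) + s • (2 * X 1 - X 0 * X 2) =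
      weightTwoForm r 0 r s := by
    simp only [weightTwoForm, smul_eq_C_mul, map_zero]
    ring
  simp only [h0c, Submodule.mem_span_pair, hcomb, weightTwoForm_inj]
  constructor
  · rintro ⟨r, s, rfl, rfl, rfl, rfl⟩
    exact ⟨rfl, rfl⟩
  · rintro ⟨rfl, rfl⟩
    exact ⟨a, d, rfl, rfl, rfl, rfl⟩

theorem pderiv_zero_weightThreeForm (a b c d e f : ℝ) :
    pderiv 0 (weightThreeForm a b c d e f) = weightTwoForm (3 * a) (2 * b - e) (c - f) e := by
  simp only [weightThreeForm, weightTwoForm, map_add, map_sub, map_mul, map_ofNat,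
    Derivation.leibniz, Derivation.leibniz_pow, derivation_C, pderiv_X, pderiv_ofNat,
    Pi.single_apply, Fin.reduceEq, if_true, if_false, smul_eq_mul, nsmul_eq_mul, Nat.cast_ofNat]
  ring

theorem pderiv_one_weightThreeForm (a b c d e f : ℝ) :
    pderiv 1 (weightThreeForm a b c d e f) = 2 * (C e * X 0 + C f * X 2) := by
  simp only [weightThreeForm, map_add, map_sub, Derivation.leibniz, Derivation.leibniz_pow,
    derivation_C, pderiv_X, pderiv_ofNat, Pi.single_apply, Fin.reduceEq, if_true, if_false,
    smul_eq_mul, nsmul_eq_mul, Nat.cast_ofNat]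
  ring

theorem pderiv_two_weightThreeForm (a b c d e f : ℝ) :
    pderiv 2 (weightThreeForm a b c d e f) = weightTwoForm (b - e) (2 * c - f) (3 * d) f := by
  simp only [weightThreeForm, weightTwoForm, map_add, map_sub, map_mul, map_ofNat,
    Derivation.leibniz, Derivation.leibniz_pow, derivation_C, pderiv_X, pderiv_ofNat,
    Pi.single_apply, Fin.reduceEq, if_true, if_false, smul_eq_mul, nsmul_eq_mul, Nat.cast_ofNat]
  ring

theorem lagr_weightThreeForm_X_zero (a b c d e f : ℝ) :
    lagr (weightThreeForm a b c d e f) (X 0) =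
      weightTwoForm (-(b + e)) (-(2 * c + f)) (-(3 * d)) (-f) := by
  rw [lagr_X_zero, pderiv_one_weightThreeForm, pderiv_two_weightThreeForm]
  simp only [weightTwoForm, map_add, map_sub, map_mul, map_neg, map_ofNat]
  ring

theorem lagr_weightThreeForm_X_two (a b c d e f : ℝ) :
    lagr (weightThreeForm a b c d e f) (X 2) = weightTwoForm (3 * a) (2 * b - e) (c - f) e := by
  rw [lagr_X_two, pderiv_zero_weightThreeForm]

/-- The element with coordinates `a, b` in the two generators of the first prolongation of `h₀`,
written in the coordinates of `L₁`. -/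
def prolongationForm (a b : ℝ) : PL :=
  weightThreeForm a b a b (2 * b) (-2 * a)

theorem smul_add_smul_eq_prolongationForm (a b : ℝ) :
    a • (X 0 * (X 0 ^ 2 + X 2 ^ 2) - 2 * X 2 * (2 * X 1 - X 0 * X 2) : PL) +
      b • (X 2 * (X 0 ^ 2 + X 2 ^ 2) + 2 * X 0 * (2 * X 1 - X 0 * X 2)) =
      prolongationForm a b := by
  simp only [prolongationForm, weightThreeForm, smul_eq_C_mul, map_mul, map_neg, map_ofNat]
  ring

theorem mem_W1span_iff {u : PL} : u ∈ W1span ↔ ∃ a b, prolongationForm a b = u := by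
  simp only [W1span, Submodule.mem_span_pair, smul_add_smul_eq_prolongationForm]

theorem mem_prolongation_h0c_iff_mem_W1span (u : PL) :
    (u ∈ L1span ∧ lagr u (X 0) ∈ h0c ∧ lagr u (X 2) ∈ h0c) ↔ u ∈ W1span := by
  rw [mem_L1span_iff, mem_W1span_iff]
  constructor
  · rintro ⟨⟨a, b, c, d, e, f, rfl⟩, hx, hz⟩
    rw [lagr_weightThreeForm_X_zero, weightTwoForm_mem_h0c_iff] at hx
    rw [lagr_weightThreeForm_X_two, weightTwoForm_mem_h0c_iff] at hz
    obtain ⟨hx₁, hx₂⟩ := hx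
    obtain ⟨hz₁, hz₂⟩ := hz
    have he : e = 2 * b := by linarith
    have hf : f = -2 * c := by linarith
    have ha : a = c := by linarith
    have hd : d = b := by linarith
    exact ⟨c, b, by rw [prolongationForm, ha, hd, he, hf]⟩
  · rintro ⟨a, b, rfl⟩
    rw [prolongationForm, lagr_weightThreeForm_X_zero, lagr_weightThreeForm_X_two,
      weightTwoForm_mem_h0c_iff, weightTwoForm_mem_h0c_iff]
    exact ⟨⟨_, _, _, _, _, _, rfl⟩, ⟨by ring, by ring⟩, by ring, by ring⟩

theorem linearIndependent_W1span_generators :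
    LinearIndependent ℝ ![X 0 * (X 0 ^ 2 + X 2 ^ 2) - 2 * X 2 * (2 * X 1 - X 0 * X 2),
      (X 2 * (X 0 ^ 2 + X 2 ^ 2) + 2 * X 0 * (2 * X 1 - X 0 * X 2) : PL)] := by
  refine LinearIndependent.pair_iff.mpr fun a b h => ?_
  have heval (v : Fin 3 → ℝ) := congrArg (eval v) h
  exact ⟨by simpa using heval ![1, 0, 0], by simpa using heval ![0, 0, 1]⟩

theorem finrank_W1span : Module.finrank ℝ W1span = 2 := by
  rw [W1span, ← Matrix.range_cons_cons_empty _ _ ![],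
    finrank_span_eq_card linearIndependent_W1span_generators, Fintype.card_fin]

theorem lagr_sq_add_sq_prolongationForm (a b : ℝ) :
    lagr (X 0 ^ 2 + X 2 ^ 2) (prolongationForm a b) = prolongationForm (2 * b) (-2 * a) := by
  rw [lagr_sq_add_sq, prolongationForm, pderiv_zero_weightThreeForm, pderiv_one_weightThreeForm,
    pderiv_two_weightThreeForm]
  simp only [prolongationForm, weightThreeForm, weightTwoForm, map_sub, map_mul, map_neg, map_ofNat]
  ring

theorem lagrAd_sq_add_sq_apply_apply {w : PL} (hw : w ∈ W1span) :
    lagrAd (X 0 ^ 2 + X 2 ^ 2) (lagrAd (X 0 ^ 2 + X 2 ^ 2) w) = (-4 : ℝ) • w := by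
  obtain ⟨a, b, rfl⟩ := mem_W1span_iff.mp hw
  change lagr _ (lagr _ _) = _
  rw [lagr_sq_add_sq_prolongationForm, lagr_sq_add_sq_prolongationForm]
  simp only [← smul_add_smul_eq_prolongationForm]
  module

theorem eq_bot_or_eq_W1span_of_lagr_sq_add_sq_mem {W : Submodule ℝ PL} (hW : W ≤ W1span)
    (hinv : ∀ w ∈ W, lagr (X 0 ^ 2 + X 2 ^ 2) w ∈ W) : W = ⊥ ∨ W = W1span := by
  have hneg : ¬IsSquare (-4 : ℝ) := fun h => by linarith [h.nonneg]
  exact eq_bot_or_eq_of_invariant_of_not_isSquare hneg finrank_W1span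
    (fun _ => lagrAd_sq_add_sq_apply_apply) hW hinv

/-- For `h₀ = span{x²+z², 2y−xz}`, the first prolongation of `h₀` is
`{u ∈ L₁ : {u,x} ∈ h₀ and {u,z} ∈ h₀} = span{x(x²+z²) − 2z(2y−xz), z(x²+z²) + 2x(2y−xz)}`,
a two-dimensional space on which `h₀` acts irreducibly via the Lagrange bracket. -/
theorem stmt14 :
    (∀ u : PL, (u ∈ L1span ∧ lagr u (X 0) ∈ h0c ∧ lagr u (X 2) ∈ h0c) ↔ u ∈ W1span) ∧
    Module.finrank ℝ ↥W1span = 2 ∧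
    (∀ W : Submodule ℝ PL, W ≤ W1span →
      (∀ v ∈ h0c, ∀ w ∈ W, lagr v w ∈ W) → W = ⊥ ∨ W = W1span) := by
  refine ⟨mem_prolongation_h0c_iff_mem_W1span, finrank_W1span, fun W hW hinv => ?_⟩
  have hmem : X 0 ^ 2 + X 2 ^ 2 ∈ h0c := Submodule.subset_span (Set.mem_insert _ _)
  exact eq_bot_or_eq_W1span_of_lagr_sq_add_sq_mem hW (hinv _ hmem)
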